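/- There exist absolute constants c, c_0, c_1, c_2 > 0 such that the following holds. Let C : {0,1}^k → {0,1}^n be a linear (3, δ)-wLDC, let d be a positive integer, and assume k ≤ n/c_0. Then there exist codes C_2 : {0,1}^{k_2} → {0,1}^{n} and C_3 : {0,1}^{k_3} → {0,1}^{N} with k_2 ≥ k/2 and k_3 ≥ k/2, where N = C(2n, ℓ) and ℓ = (√(n/k))/c, such that either C_2 is a linear (2, c_1 · δ · d/(d+k))-wLDC or C_3 is a linear (2, c_2 · δ^2/d)-wLDC. -/

import Mathlib

open Finset
open scoped Classical

noncomputable section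

/-- A code `Enc : {0,1}^k → {0,1}^n` (over `F₂`) is a linear `(q, δ)`-weakly locally
decodable code: `Enc` is `F₂`-linear and there are `q`-uniform hypergraph matchings
`H 1, …, H k` on `[n]` with `Σᵢ |H i| ≥ δnk` such that for every `i`, every `C ∈ H i`,
and every message `b`, `⊕_{v ∈ C} Enc(b)_v = b_i`. -/
def IsLinearWLDC (q k n : ℕ) (δ : ℝ)
    (Enc : (Fin k → ZMod 2) → Fin n → ZMod 2) : Prop :=
  IsLinearMap (ZMod 2) Enc ∧
  ∃ H : Fin k → Finset (Finset (Fin n)),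
    (∀ i, ∀ C ∈ H i, C.card = q) ∧
    (∀ i, Set.Pairwise (H i : Set (Finset (Fin n))) Disjoint) ∧
    δ * n * k ≤ ∑ i, ((H i).card : ℝ) ∧
    (∀ i, ∀ C ∈ H i, ∀ b : Fin k → ZMod 2, ∑ v ∈ C, Enc b v = b i)

/-!
Fix a threshold `d` for the number of matchings in which a given pair of positions extends to an
edge, and call an edge heavy if it contains a pair above the threshold.

If at least half of the edges are heavy, split each of them into a heavy pair and a single point.
There are at most `n k / d` heavy pairs, so recording the sums over the `n / 2` most frequent heavy
pairs and over the `n / 2` most frequent points gives `n` symbols and keeps an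
`Ω(d / (d + k))` fraction of the edges, now as queries to two symbols.

Otherwise discard the heavy edges. Edges `{u, v, v'}` of `H i` and `{u, w, w'}` of `H j` that meet
in `u` give the link `y v + y v' + y w + y w' = b i + b j`. Some half `L` of the message indices has
a constant fraction of all links going from `L` to its complement, and fixing the message to be `0`
outside `L` makes every such link decode `b i`. Place `v, v'` in one copy of `[n]` and `w, w'` in
another, and encode by the sums over `ℓ`-element subsets of the two copies. A set `S` with
`v, w ∈ S` and `v', w' ∉ S` is joined in the Kikuchi graph to `S \ {v, w} ∪ {v', w'}`, and the two
symbols sum to `b i`. The codegree bound controls the second moment of the degrees of this graph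
when `ℓ` is about `√(n / k)`, so after discarding the edges at vertices of large degree a greedy
matching retains a `1 / O(d)` fraction of the edges.
-/

section Decoding

variable {κ V ι : Type*} {q : ℕ}

/-- A `q`-uniform hypergraph matching: a family of pairwise disjoint `q`-element sets. -/
structure IsUniformMatching (q : ℕ) (H : Finset (Finset V)) : Prop where
  card_eq : ∀ C ∈ H, #C = q
  pairwiseDisjoint : (H : Set (Finset V)).PairwiseDisjoint id

/-- The matchings `H i` decode the linear code `y`: the codeword symbols on each edge of `H i` sum
to the `i`-th message symbol. Message symbols and codeword positions are indexed by arbitrary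
types. -/
structure IsDecodingFamily (q : ℕ) (y : (κ → ZMod 2) →ₗ[ZMod 2] (V → ZMod 2))
    (H : κ → Finset (Finset V)) : Prop where
  matching : ∀ i, IsUniformMatching q (H i)
  sum_eq : ∀ i, ∀ C ∈ H i, ∀ b, ∑ v ∈ C, y b v = b i

theorem IsUniformMatching.mono {H H' : Finset (Finset V)} (hH : IsUniformMatching q H)
    (h : H' ⊆ H) : IsUniformMatching q H' :=
  ⟨fun C hC => hH.card_eq C (h hC), hH.pairwiseDisjoint.subset (coe_subset.2 h)⟩

theorem IsUniformMatching.eq_of_mem {H : Finset (Finset V)} (hH : IsUniformMatching q H)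
    {C D : Finset V} (hC : C ∈ H) (hD : D ∈ H) {v : V} (hvC : v ∈ C) (hvD : v ∈ D) : C = D :=
  hH.pairwiseDisjoint.elim_finset hC hD v hvC hvD

theorem IsUniformMatching.card_biUnion [DecidableEq V] {H : Finset (Finset V)}
    (hH : IsUniformMatching q H) : #(H.biUnion id) = q * #H :=
  (Finset.card_biUnion hH.pairwiseDisjoint).trans
    ((sum_const_nat hH.card_eq).trans (mul_comm _ _))

theorem IsUniformMatching.mul_card_le [Fintype V] {H : Finset (Finset V)}
    (hH : IsUniformMatching q H) : q * #H ≤ Fintype.card V :=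
  hH.card_biUnion.symm.trans_le (card_le_univ _)

theorem IsDecodingFamily.mono {y : (κ → ZMod 2) →ₗ[ZMod 2] (V → ZMod 2)}
    {H H' : κ → Finset (Finset V)} (hH : IsDecodingFamily q y H) (h : ∀ i, H' i ⊆ H i) :
    IsDecodingFamily q y H' :=
  ⟨fun i => (hH.matching i).mono (h i), fun i C hC => hH.sum_eq i C (h i hC)⟩

theorem isUniformMatching_image [DecidableEq V] {M : Finset ι} {f : ι → Finset V}
    (hf : ∀ e ∈ M, #(f e) = q) (hM : (M : Set ι).PairwiseDisjoint f) :
    IsUniformMatching q (M.image f) := by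
  refine ⟨forall_mem_image.2 hf, ?_⟩
  simp only [coe_image, Set.PairwiseDisjoint, Set.Pairwise, Set.forall_mem_image]
  exact fun e he e' he' hne => hM he he' fun h => hne (by rw [h])

theorem card_image_of_pairwiseDisjoint [DecidableEq V] {M : Finset ι} {f : ι → Finset V}
    (hf : ∀ e ∈ M, (f e).Nonempty) (hM : (M : Set ι).PairwiseDisjoint f) :
    #(M.image f) = #M :=
  card_image_of_injOn fun e he _ he' h => hM.eq_of_le he he' (hf e he).ne_empty (le_of_eq h)

theorem IsUniformMatching.map {W : Type*} [DecidableEq W] {H : Finset (Finset V)}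
    (hH : IsUniformMatching q H) {U : Finset V} (hU : ∀ C ∈ H, C ⊆ U) (φ : U ↪ W) :
    IsUniformMatching q (H.image fun C => (C.subtype (· ∈ U)).map φ) ∧
      #(H.image fun C => (C.subtype (· ∈ U)).map φ) = #H := by
  refine ⟨isUniformMatching_image (fun C hC => ?_) fun C hC D hD hne => ?_,
    card_image_of_injOn fun C hC D hD hCD => ?_⟩
  · rw [card_map, card_subtype, filter_true_of_mem fun v hv => hU C hC hv, hH.card_eq C hC]
  · rw [Function.onFun, disjoint_map, disjoint_left]
    simp only [mem_subtype]
    exact fun v hvC hvD => disjoint_left.1 (hH.pairwiseDisjoint hC hD hne) hvC hvD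
  · have h := congrArg (Finset.map (Function.Embedding.subtype _)) (map_injective φ hCD)
    rwa [subtype_map, subtype_map, filter_true_of_mem fun v hv => hU C hC hv,
      filter_true_of_mem fun v hv => hU D hD hv] at h

theorem IsDecodingFamily.exists_isLinearWLDC [Fintype κ]
    {y : (κ → ZMod 2) →ₗ[ZMod 2] (V → ZMod 2)} {H : κ → Finset (Finset V)}
    (hH : IsDecodingFamily q y H) {n : ℕ} {δ : ℝ} {U : Finset V} (hUn : #U ≤ n)
    (hHU : ∀ i, ∀ C ∈ H i, C ⊆ U) (hδ : δ * n * Fintype.card κ ≤ ∑ i, (#(H i) : ℝ)) :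
    ∃ Enc, IsLinearWLDC q (Fintype.card κ) n δ Enc := by
  obtain ⟨φ⟩ : Nonempty (U ↪ Fin n) := Function.Embedding.nonempty_of_card_le (by simpa using hUn)
  let σ := Fintype.equivFin κ
  let Enc : (Fin (Fintype.card κ) → ZMod 2) →ₗ[ZMod 2] (Fin n → ZMod 2) :=
    Function.ExtendByZero.linearMap (ZMod 2) φ ∘ₗ
      LinearMap.funLeft (ZMod 2) (ZMod 2) (Subtype.val : U → V) ∘ₗ y ∘ₗ
      LinearMap.funLeft (ZMod 2) (ZMod 2) σ
  have hEnc (b) (u : U) : Enc b (φ u) = y (b ∘ σ) u := φ.injective.extend_apply _ _ _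
  have hmap i := (hH.matching (σ.symm i)).map (hHU (σ.symm i)) φ
  refine ⟨Enc, Enc.isLinear, _, fun i => (hmap i).1.card_eq, fun i => (hmap i).1.pairwiseDisjoint,
    ?_, fun i => forall_mem_image.2 fun C hC b => ?_⟩
  · simp only [(hmap _).2]
    rwa [σ.symm.sum_comp fun i => (#(H i) : ℝ)]
  · simp only [sum_map, hEnc]
    rw [sum_subtype_of_mem (y (b ∘ σ)) (hHU _ C hC), hH.sum_eq _ C hC]
    exact congrArg b (σ.apply_symm_apply i)

theorem exists_isLinearWLDC_two [Fintype κ] [DecidableEq V]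
    {y : (κ → ZMod 2) →ₗ[ZMod 2] (V → ZMod 2)} {M : κ → Finset ι} {s t : ι → V}
    (hM : ∀ i, (M i : Set ι).PairwiseDisjoint fun e => ({s e, t e} : Finset V))
    (hne : ∀ i, ∀ e ∈ M i, s e ≠ t e) (hsum : ∀ i, ∀ e ∈ M i, ∀ b, y b (s e) + y b (t e) = b i)
    {n : ℕ} {δ : ℝ} {U : Finset V} (hUn : #U ≤ n) (hU : ∀ i, ∀ e ∈ M i, s e ∈ U ∧ t e ∈ U)
    (hδ : δ * n * Fintype.card κ ≤ ∑ i, (#(M i) : ℝ)) :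
    ∃ Enc, IsLinearWLDC 2 (Fintype.card κ) n δ Enc := by
  have hH : IsDecodingFamily 2 y fun i => (M i).image fun e => {s e, t e} :=
    ⟨fun i => isUniformMatching_image (fun e he => card_pair (hne i e he)) (hM i),
      fun i => forall_mem_image.2 fun e he b => (sum_pair (hne i e he)).trans (hsum i e he b)⟩
  refine hH.exists_isLinearWLDC hUn (fun i => forall_mem_image.2 fun e he => ?_) ?_
  · exact insert_subset (hU i e he).1 (singleton_subset_iff.2 (hU i e he).2)
  · simpa only [card_image_of_pairwiseDisjoint (fun _ _ => insert_nonempty _ _) (hM _)] using hδ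

end Decoding

section Matching

variable {ι V : Type*}

theorem exists_pairwiseDisjoint_card_le_mul [DecidableEq V] {G : Finset ι} {f : ι → Finset V}
    {D : ℕ} (hf : ∀ e ∈ G, (f e).Nonempty)
    (hD : ∀ e ∈ G, #{e' ∈ G | ¬ Disjoint (f e) (f e')} ≤ D) :
    ∃ M ⊆ G, (M : Set ι).PairwiseDisjoint f ∧ #G ≤ #M * D := by
  obtain ⟨M, hM⟩ := exists_maximal
    (s := G.powerset.filter fun M : Finset ι => (M : Set ι).PairwiseDisjoint f) ⟨∅, by simp⟩
  simp only [mem_filter, mem_powerset] at hM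
  obtain ⟨hMG, hMf⟩ := hM.prop
  refine ⟨M, hMG, hMf, (card_le_card (t := M.biUnion _) fun e he => ?_).trans
    (card_biUnion_le_card_mul M _ D fun e he => hD e (hMG he))⟩
  by_contra hcover
  simp only [mem_biUnion, mem_filter, he, true_and, not_exists, not_and, not_not] at hcover
  have heM : e ∈ M := by
    refine hM.le_of_ge ⟨insert_subset he hMG, ?_⟩ (subset_insert e M) (mem_insert_self e M)
    rw [coe_insert]
    exact hMf.insert fun e' he' _ => (hcover e' he').symm
  exact (hf e he).ne_empty (disjoint_self.1 (hcover e heM))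

/-- The degree of the vertex `x` in the multigraph whose edges `e ∈ E` join `s e` to `t e`. Loops
count twice. -/
def edgeDegree [DecidableEq V] (E : Finset ι) (s t : ι → V) (x : V) : ℕ :=
  #{e ∈ E | s e = x} + #{e ∈ E | t e = x}

variable [DecidableEq V] {E : Finset ι} {s t : ι → V}

theorem card_filter_not_disjoint_le_edgeDegree (e : ι) :
    #{e' ∈ E | ¬ Disjoint ({s e, t e} : Finset V) {s e', t e'}} ≤
      edgeDegree E s t (s e) + edgeDegree E s t (t e) := by
  have hcover : {e' ∈ E | ¬ Disjoint ({s e, t e} : Finset V) {s e', t e'}} ⊆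
      ({e' ∈ E | s e' = s e} ∪ {e' ∈ E | t e' = s e}) ∪
        ({e' ∈ E | s e' = t e} ∪ {e' ∈ E | t e' = t e}) := by
    intro e'
    simp only [mem_filter, disjoint_insert_left, disjoint_singleton_left, mem_insert, mem_singleton,
      mem_union]
    tauto
  refine (card_le_card hcover).trans ((card_union_le _ _).trans ?_)
  exact Nat.add_le_add (card_union_le _ _) (card_union_le _ _)

theorem sum_edgeDegree_add_edgeDegree [Fintype V] :
    ∑ e ∈ E, (edgeDegree E s t (s e) + edgeDegree E s t (t e)) =
      ∑ x, edgeDegree E s t x ^ 2 := by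
  have hfiber (r : ι → V) : ∑ e ∈ E, edgeDegree E s t (r e) =
      ∑ x, #{e ∈ E | r e = x} * edgeDegree E s t x := by
    simp only [← sum_fiberwise E r fun e => edgeDegree E s t (r e), ← smul_eq_mul, ← sum_const]
    exact sum_congr rfl fun x _ => sum_congr rfl fun e he => by rw [(mem_filter.1 he).2]
  rw [sum_add_distrib, hfiber s, hfiber t, ← sum_add_distrib]
  exact sum_congr rfl fun x _ => by rw [← add_mul, sq, edgeDegree]

theorem card_le_two_mul_card_filter_le {w : ι → ℕ} {K : ℕ} (hK : ∑ e ∈ E, w e ≤ K * #E) :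
    #E ≤ 2 * #{e ∈ E | w e ≤ 2 * K} := by
  have hlarge : #{e ∈ E | ¬ w e ≤ 2 * K} * (2 * K + 1) ≤ K * #E := by
    refine (card_nsmul_le_sum _ w _ fun e he => ?_).trans
      ((sum_le_sum_of_subset (filter_subset _ E)).trans hK)
    exact Nat.lt_of_not_le (mem_filter.1 he).2
  have hcard := card_filter_add_card_filter_not (s := E) (w · ≤ 2 * K)
  by_contra! hlt
  nlinarith

theorem exists_pairwiseDisjoint_of_sum_sq_edgeDegree_le [Fintype V] {K : ℕ}
    (hK : ∑ x, edgeDegree E s t x ^ 2 ≤ K * #E) :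
    ∃ M ⊆ E, (M : Set ι).PairwiseDisjoint (fun e => ({s e, t e} : Finset V)) ∧
      #E ≤ 4 * K * #M := by
  rw [← sum_edgeDegree_add_edgeDegree] at hK
  obtain ⟨M, hME, hM, hcard⟩ := exists_pairwiseDisjoint_card_le_mul
    (G := {e ∈ E | edgeDegree E s t (s e) + edgeDegree E s t (t e) ≤ 2 * K})
    (f := fun e => ({s e, t e} : Finset V)) (fun e _ => insert_nonempty _ _) fun e he =>
      (card_le_card (filter_subset_filter _ (filter_subset _ E))).trans
        ((card_filter_not_disjoint_le_edgeDegree e).trans (mem_filter.1 he).2)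
  refine ⟨M, hME.trans (filter_subset _ E), hM, (card_le_two_mul_card_filter_le hK).trans ?_⟩
  calc 2 * _ ≤ 2 * (#M * (2 * K)) := by gcongr
    _ = 4 * K * #M := by ring

end Matching

section Averaging

variable {β : Type*}

theorem exists_subset_card_le_mul_sum_le_max_mul_sum (P : Finset β) (w : β → ℕ) (t : ℕ) :
    ∃ P' ⊆ P, #P' ≤ t ∧ t * ∑ x ∈ P, w x ≤ max t #P * ∑ x ∈ P', w x := by
  classical
  induction P using Finset.induction_on_min_value w with
  | empty => exact ⟨∅, by simp⟩
  | insert a s ha hmin ih =>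
    obtain hcard | hcard := le_or_gt #(insert a s) t
    · exact ⟨insert a s, subset_rfl, hcard, Nat.mul_le_mul_right _ (le_max_left _ _)⟩
    rw [card_insert_of_notMem ha] at hcard ⊢
    obtain ⟨P', hP's, hP't, hP'⟩ := ih
    refine ⟨P', hP's.trans (subset_insert a s), hP't, ?_⟩
    rw [max_eq_right (by omega)] at hP' ⊢
    have ha_le : t * w a ≤ ∑ x ∈ P', w x := by
      obtain hs | hs := Nat.eq_zero_or_pos #s
      · simp [show t = 0 by omega]
      refine Nat.le_of_mul_le_mul_left ?_ hs
      calc #s * (t * w a) = t * (#s * w a) := by ring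
        _ ≤ t * ∑ x ∈ s, w x := Nat.mul_le_mul_left _ (card_nsmul_le_sum s w _ hmin)
        _ ≤ #s * ∑ x ∈ P', w x := hP'
    rw [sum_insert ha]
    linarith

theorem exists_half_cut [DecidableEq β] (s : Finset β) {w : β → β → ℕ}
    (hw : ∀ i j, w i j = w j i) :
    ∃ L ⊆ s, ∑ i ∈ s, ∑ j ∈ s, w i j ≤ 4 * ∑ i ∈ L, ∑ j ∈ s \ L, w i j + ∑ i ∈ s, w i i := by
  induction s using Finset.induction_on with
  | empty => exact ⟨∅, subset_rfl, by simp⟩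
  | insert a s ha ih =>
    obtain ⟨L, hL, h⟩ := ih
    have haL : a ∉ L := fun h => ha (hL h)
    have ha' : a ∉ s \ L := fun h => ha (mem_sdiff.1 h).1
    have hsplit : ∑ j ∈ s \ L, w a j + ∑ j ∈ L, w a j = ∑ j ∈ s, w a j := sum_sdiff hL
    have htotal : ∑ i ∈ insert a s, ∑ j ∈ insert a s, w i j =
        w a a + 2 * ∑ j ∈ s, w a j + ∑ i ∈ s, ∑ j ∈ s, w i j := by
      simp only [sum_insert ha, sum_add_distrib, hw _ a]
      ring
    rw [htotal, sum_insert ha]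
    -- Put `a` on the side that receives less of its weight, so that most of it is cut.
    obtain hle | hlt := le_or_gt (∑ j ∈ L, w a j) (∑ j ∈ s \ L, w a j)
    · refine ⟨insert a L, insert_subset_insert _ hL, ?_⟩
      rw [insert_sdiff_insert, sdiff_insert_of_notMem ha, sum_insert haL]
      omega
    · refine ⟨L, hL.trans (subset_insert _ _), ?_⟩
      simp only [insert_sdiff_of_notMem _ haL, sum_insert ha', sum_add_distrib, hw _ a]
      omega

theorem exists_large_half_cut [Fintype β] [DecidableEq β] {w : β → β → ℕ}
    (hw : ∀ i j, w i j = w j i) :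
    ∃ L : Finset β, Fintype.card β ≤ 2 * #L ∧
      ∑ i, ∑ j, w i j ≤ 4 * ∑ i ∈ L, ∑ j ∈ Lᶜ, w i j + ∑ i, w i i := by
  obtain ⟨L, -, h⟩ := exists_half_cut univ hw
  rw [← compl_eq_univ_sdiff] at h
  obtain hL | hL := le_or_gt (Fintype.card β) (2 * #L)
  · exact ⟨L, hL, h⟩
  · have hcard := card_add_card_compl L
    have hcomm : ∑ i ∈ Lᶜ, ∑ j ∈ L, w i j = ∑ i ∈ L, ∑ j ∈ Lᶜ, w i j :=
      sum_comm.trans (sum_congr rfl fun i _ => sum_congr rfl fun j _ => hw j i)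
    exact ⟨Lᶜ, by omega, by rwa [compl_compl, hcomm]⟩

theorem sq_sum_card_le_card_mul_sum_card_inter {κ α : Type*} [Fintype κ] [Fintype α]
    [DecidableEq α] (V : κ → Finset α) :
    (∑ i, #(V i)) ^ 2 ≤ Fintype.card α * ∑ i, ∑ j, #(V i ∩ V j) := by
  have hcard (T : Finset α) : #T = ∑ u, if u ∈ T then 1 else 0 := by simp
  have hlin : ∑ i, #(V i) = ∑ u, ∑ i, if u ∈ V i then 1 else 0 := by
    simp only [hcard]
    exact sum_comm
  have hquad : ∑ i, ∑ j, #(V i ∩ V j) = ∑ u, (∑ i, if u ∈ V i then 1 else 0) ^ 2 := by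
    simp only [sq, sum_mul_sum, hcard, mem_inter, ← ite_and, ite_mul, one_mul, zero_mul]
    exact (sum_congr rfl fun i _ => sum_comm).trans sum_comm
  rw [hlin, hquad]
  exact sq_sum_le_card_mul_sum_sq

end Averaging

section SubsetCounting

variable {X : Type*} [Fintype X] [DecidableEq X] {ℓ : ℕ}

theorem card_filter_powersetCard_subset_disjoint {Q R : Finset X} (hQR : Disjoint Q R)
    (hℓ : #Q ≤ ℓ) :
    #{S ∈ powersetCard ℓ univ | Q ⊆ S ∧ Disjoint S R} =
      (Fintype.card X - #Q - #R).choose (ℓ - #Q) := by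
  have havoid : (powersetCard ℓ univ).filter (fun S => Q ⊆ S ∧ Disjoint S R) =
      (powersetCard ℓ Rᶜ).filter (Q ⊆ ·) := by
    ext S
    simp only [mem_filter, mem_powersetCard, subset_univ, subset_compl_iff_disjoint_right]
    tauto
  rw [havoid, card_filter_powersetCard_subset Q _ ℓ (subset_compl_iff_disjoint_right.2 hQR) hℓ,
    card_compl, Nat.sub_right_comm]

theorem card_filter_powersetCard_univ_subset (Q : Finset X) (hℓ : #Q ≤ ℓ) :
    #{S ∈ powersetCard ℓ univ | Q ⊆ S} = (Fintype.card X - #Q).choose (ℓ - #Q) :=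
  card_filter_powersetCard_subset Q univ ℓ (subset_univ Q) hℓ

end SubsetCounting

section Binomial

theorem add_one_add_mul_choose_le (m r c : ℕ) :
    (m + 1 + c) * m.choose r ≤ (r + 1 + c) * (m + 1).choose (r + 1) := by
  have hle : m.choose r ≤ (m + 1).choose (r + 1) :=
    (Nat.choose_succ_succ m r).symm ▸ Nat.le_add_right _ _
  have h := Nat.add_one_mul_choose_eq m r
  nlinarith

theorem three_mul_choose_succ_le {m r : ℕ} (h : 4 * r ≤ m + 1) :
    3 * (m + 1).choose r ≤ 4 * m.choose r := by
  have hchoose := Nat.choose_mul_succ_eq m r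
  obtain ⟨j, hj⟩ := Nat.exists_eq_add_of_le (show r ≤ m + 1 by omega)
  rw [hj, Nat.add_sub_cancel_left, ← hj] at hchoose
  refine Nat.le_of_mul_le_mul_left ?_ (Nat.succ_pos m)
  nlinarith [Nat.zero_le ((m + 1).choose r)]

theorem choose_sub_two_le_two_mul_choose_sub_four {N ℓ : ℕ} (hℓ : 2 ≤ ℓ) (hℓN : 4 * ℓ ≤ N) :
    (N - 2).choose (ℓ - 2) ≤ 2 * (N - 4).choose (ℓ - 2) := by
  obtain ⟨m, rfl⟩ := Nat.exists_eq_add_of_le (show 4 ≤ N by omega)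
  have h₁ := three_mul_choose_succ_le (m := m) (r := ℓ - 2) (by omega)
  have h₂ := three_mul_choose_succ_le (m := m + 1) (r := ℓ - 2) (by omega)
  rw [show 4 + m - 2 = m + 1 + 1 by omega, Nat.add_sub_cancel_left]
  omega

theorem mul_choose_sub_le (c : ℕ) {N ℓ : ℕ} (hcℓ : c < ℓ) (hcN : c < N) :
    N * (N - (c + 1)).choose (ℓ - (c + 1)) ≤ ℓ * (N - c).choose (ℓ - c) := by
  have h := add_one_add_mul_choose_le (N - (c + 1)) (ℓ - (c + 1)) c
  rwa [show N - (c + 1) + 1 = N - c by omega, show ℓ - (c + 1) + 1 = ℓ - c by omega,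
    Nat.sub_add_cancel hcN.le, Nat.sub_add_cancel hcℓ.le] at h

theorem kikuchi_second_moment_le {n k d ℓ : ℕ} (hd : 0 < d) (hℓ : 4 ≤ ℓ) (hℓn : 2 * ℓ ≤ n)
    (hub : k * ℓ ^ 2 ≤ n) :
    4 * (2 * d * (2 * n - 2).choose (ℓ - 2) + 8 * k * (2 * n - 3).choose (ℓ - 3) +
      4 * (n * k) * (2 * n - 4).choose (ℓ - 4)) ≤ 32 * d * (2 * n - 4).choose (ℓ - 2) := by
  have h₂₄ := choose_sub_two_le_two_mul_choose_sub_four (N := 2 * n) (show 2 ≤ ℓ by omega)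
    (by omega)
  have h₃ := mul_choose_sub_le 2 (N := 2 * n) (show 2 < ℓ by omega) (by omega)
  have h₄ := mul_choose_sub_le 3 (N := 2 * n) (show 3 < ℓ by omega) (by omega)
  norm_num only at h₃ h₄
  set A := (2 * n - 2).choose (ℓ - 2)
  set B := (2 * n - 3).choose (ℓ - 3)
  set D := (2 * n - 4).choose (ℓ - 4)
  have hn : 0 < n := by omega
  have hkℓ : 4 * (k * ℓ) ≤ n := by nlinarith
  have hkB : 8 * (k * B) ≤ A := by
    refine Nat.le_of_mul_le_mul_left ?_ hn
    nlinarith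
  have hkD : 4 * (n * k * D) ≤ A := by
    refine Nat.le_of_mul_le_mul_left ?_ hn
    calc n * (4 * (n * k * D)) = k * (2 * n * (2 * n * D)) := by ring
      _ ≤ k * (2 * n * (ℓ * B)) := by gcongr
      _ = k * ℓ * (2 * n * B) := by ring
      _ ≤ k * ℓ * (ℓ * A) := by gcongr
      _ = k * ℓ ^ 2 * A := by ring
      _ ≤ n * A := by gcongr
  have hdA : A ≤ d * A := Nat.le_mul_of_pos_left _ hd
  calc 4 * (2 * d * A + 8 * k * B + 4 * (n * k) * D)
      = 4 * (2 * (d * A) + 8 * (k * B) + 4 * (n * k * D)) := by ring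
    _ ≤ 8 * (d * A) + 8 * (d * A) := by omega
    _ ≤ _ := by nlinarith

theorem choose_le_mul_choose_sub_four {n k ℓ : ℕ} (hℓ : 2 ≤ ℓ) (hℓn : 2 * ℓ ≤ n)
    (hlb : n ≤ 4 * (k * ℓ ^ 2)) :
    (2 * n).choose ℓ ≤ 64 * (n * k) * (2 * n - 4).choose (ℓ - 2) := by
  have hpairs (m : ℕ) : 2 * m.choose 2 + m = m ^ 2 := by
    induction m with
    | zero => rfl
    | succ m ih => rw [Nat.choose_succ_succ' m 1, Nat.choose_one_right]; linarith
  have hℓ₂ : ℓ ^ 2 ≤ 4 * ℓ.choose 2 := by nlinarith [hpairs ℓ]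
  have hn₂ : (2 * n).choose 2 ≤ 2 * n ^ 2 := by nlinarith [hpairs (2 * n)]
  have hA := choose_sub_two_le_two_mul_choose_sub_four (N := 2 * n) hℓ (by omega)
  refine Nat.le_of_mul_le_mul_left ?_ (show 0 < n by omega)
  calc n * (2 * n).choose ℓ ≤ 4 * (k * (4 * ℓ.choose 2)) * (2 * n).choose ℓ := by
        gcongr
        exact hlb.trans (by gcongr)
    _ = 16 * k * ((2 * n).choose ℓ * ℓ.choose 2) := by ring
    _ = 16 * k * ((2 * n).choose 2 * (2 * n - 2).choose (ℓ - 2)) := by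
        rw [Nat.choose_mul hℓ]
    _ ≤ 16 * k * (2 * n ^ 2 * (2 * (2 * n - 4).choose (ℓ - 2))) := by gcongr
    _ = _ := by ring

end Binomial

section Kikuchi

variable {X : Type*} [DecidableEq X]

/-- The neighbour of `S` in the Kikuchi graph along an edge that trades `Q ⊆ S` for `Q'`, where
`Q'` is disjoint from `S`. -/
def kikuchiMove (Q Q' S : Finset X) : Finset X :=
  S \ Q ∪ Q'

variable {Q Q' S : Finset X}

theorem subset_kikuchiMove : Q' ⊆ kikuchiMove Q Q' S :=
  subset_union_right

theorem card_kikuchiMove (hQ : Q ⊆ S) (hQ' : Disjoint S Q') (hcard : #Q = #Q') :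
    #(kikuchiMove Q Q' S) = #S := by
  rw [kikuchiMove, card_union_of_disjoint hQ'.disjoint_sdiff_left, ← hcard,
    card_sdiff_add_card_eq_card hQ]

theorem kikuchiMove_kikuchiMove (hQ : Q ⊆ S) (hQ' : Disjoint S Q') :
    kikuchiMove Q' Q (kikuchiMove Q Q' S) = S := by
  rw [kikuchiMove, kikuchiMove, union_sdiff_cancel_right hQ'.disjoint_sdiff_left,
    sdiff_union_of_subset hQ]

theorem kikuchiMove_ne (hQ' : Disjoint S Q') (hne : Q'.Nonempty) : kikuchiMove Q Q' S ≠ S :=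
  fun h => hne.ne_empty (disjoint_self.1 (disjoint_of_subset_left (h ▸ subset_kikuchiMove) hQ'))

theorem sum_add_sum_kikuchiMove (hQ : Q ⊆ S) (hQ' : Disjoint S Q') (y : X → ZMod 2) :
    ∑ x ∈ S, y x + ∑ x ∈ kikuchiMove Q Q' S, y x = ∑ x ∈ Q, y x + ∑ x ∈ Q', y x := by
  rw [kikuchiMove, sum_union hQ'.disjoint_sdiff_left, ← sum_sdiff hQ]
  linear_combination CharTwo.add_self_eq_zero (∑ x ∈ S \ Q, y x)

variable [Fintype X] {ι : Type*} {F : Finset ι} {Q Q' : ι → Finset X} {ℓ : ℕ}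

/-- The edges of the level-`ℓ` Kikuchi graph of a family `F` of links: the edge `(f, S)` joins the
`ℓ`-element set `S` to `kikuchiMove (Q f) (Q' f) S`. -/
def kikuchiEdges (F : Finset ι) (Q Q' : ι → Finset X) (ℓ : ℕ) : Finset (ι × Finset X) :=
  {e ∈ F ×ˢ powersetCard ℓ univ | Q e.1 ⊆ e.2 ∧ Disjoint e.2 (Q' e.1)}

theorem mem_kikuchiEdges {e : ι × Finset X} :
    e ∈ kikuchiEdges F Q Q' ℓ ↔ e.1 ∈ F ∧ #e.2 = ℓ ∧ Q e.1 ⊆ e.2 ∧ Disjoint e.2 (Q' e.1) := by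
  simp [kikuchiEdges, and_assoc]

/-- The degree of `S` in the Kikuchi graph of `F`. -/
abbrev kikuchiDegree (F : Finset ι) (Q Q' : ι → Finset X) (ℓ : ℕ) (S : Finset X) : ℕ :=
  edgeDegree (kikuchiEdges F Q Q' ℓ) Prod.snd (fun e => kikuchiMove (Q e.1) (Q' e.1) e.2) S

theorem card_kikuchiEdges (hℓ : 2 ≤ ℓ) (hQ : ∀ f ∈ F, #(Q f) = 2) (hQ' : ∀ f ∈ F, #(Q' f) = 2)
    (hdisj : ∀ f ∈ F, Disjoint (Q f) (Q' f)) :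
    #(kikuchiEdges F Q Q' ℓ) = #F * (Fintype.card X - 4).choose (ℓ - 2) := by
  simp only [kikuchiEdges, card_filter, sum_product]
  simp only [← card_filter]
  refine sum_const_nat fun f hf => ?_
  rw [card_filter_powersetCard_subset_disjoint (hdisj f hf) (by rw [hQ f hf]; exact hℓ), hQ f hf,
    hQ' f hf, Nat.sub_sub]

theorem kikuchiDegree_eq_zero (hcard : ∀ f ∈ F, #(Q f) = #(Q' f)) (hS : #S ≠ ℓ) :
    kikuchiDegree F Q Q' ℓ S = 0 := by
  simp only [kikuchiDegree, edgeDegree, Nat.add_eq_zero_iff, card_eq_zero, filter_eq_empty_iff,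
    mem_kikuchiEdges]
  refine ⟨fun e he h => hS (h ▸ he.2.1), fun e he h => hS ?_⟩
  rw [← h, card_kikuchiMove he.2.2.1 he.2.2.2 (hcard e.1 he.1), he.2.1]

theorem kikuchiDegree_le :
    kikuchiDegree F Q Q' ℓ S ≤ #{f ∈ F | Q f ⊆ S} + #{f ∈ F | Q' f ⊆ S} := by
  refine Nat.add_le_add (card_le_card_of_injOn Prod.fst ?_ ?_)
    (card_le_card_of_injOn Prod.fst ?_ ?_)
  · intro e he
    simp only [coe_filter, mem_kikuchiEdges, Set.mem_ofPred_eq] at he ⊢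
    exact ⟨he.1.1, he.2 ▸ he.1.2.2.1⟩
  · intro e he e' he' h
    simp only [coe_filter, Set.mem_ofPred_eq] at he he'
    exact Prod.ext h (he.2.trans he'.2.symm)
  · intro e he
    simp only [coe_filter, mem_kikuchiEdges, Set.mem_ofPred_eq] at he ⊢
    exact ⟨he.1.1, he.2 ▸ subset_kikuchiMove⟩
  · intro e he e' he' h
    simp only [coe_filter, mem_kikuchiEdges, Set.mem_ofPred_eq] at he he'
    refine Prod.ext h ?_
    rw [← kikuchiMove_kikuchiMove he.1.2.2.1 he.1.2.2.2, he.2, h, ← he'.2,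
      kikuchiMove_kikuchiMove he'.1.2.2.1 he'.1.2.2.2]

theorem card_filter_powersetCard_union_subset_le {A B : Finset X} (hA : #A = 2) (hB : #B = 2)
    (hℓ : 4 ≤ ℓ) :
    #{S ∈ powersetCard ℓ univ | A ∪ B ⊆ S} ≤
      (if B = A then (Fintype.card X - 2).choose (ℓ - 2) else 0) +
      (if ¬ Disjoint A B then (Fintype.card X - 3).choose (ℓ - 3) else 0) +
      (Fintype.card X - 4).choose (ℓ - 4) := by
  have hunion := card_union_add_card_inter A B
  rw [hA, hB] at hunion
  rw [card_filter_powersetCard_univ_subset _ (by omega)]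
  by_cases hAB : B = A
  · rw [hAB, union_self, hA, if_pos rfl, add_assoc]
    exact Nat.le_add_right _ _
  by_cases hdisj : Disjoint A B
  · rw [card_union_of_disjoint hdisj, hA, hB]
    exact Nat.le_add_left _ _
  · have hinter : #(A ∩ B) = 1 := by
      have hpos : 0 < #(A ∩ B) := card_pos.2 (not_disjoint_iff_nonempty_inter.1 hdisj)
      have hlt : #(A ∩ B) < #A := card_lt_card (ssubset_of_subset_of_ne inter_subset_left
        fun h => hAB (eq_of_subset_of_card_le (inter_eq_left.1 h) (by omega)).symm)
      omega
    rw [show #(A ∪ B) = 3 by omega, if_neg hAB, if_pos hdisj, zero_add]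
    exact Nat.le_add_right _ _

theorem sum_sq_card_filter_subset_le (hℓ : 4 ≤ ℓ) (hQ : ∀ f ∈ F, #(Q f) = 2) {D₁ D₂ : ℕ}
    (hD₂ : ∀ f ∈ F, #{f' ∈ F | Q f' = Q f} ≤ D₂)
    (hD₁ : ∀ f ∈ F, #{f' ∈ F | ¬ Disjoint (Q f) (Q f')} ≤ D₁) :
    ∑ S ∈ powersetCard ℓ univ, #{f ∈ F | Q f ⊆ S} ^ 2 ≤
      #F * (D₂ * (Fintype.card X - 2).choose (ℓ - 2) + D₁ * (Fintype.card X - 3).choose (ℓ - 3) +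
        #F * (Fintype.card X - 4).choose (ℓ - 4)) := by
  have hpairs : ∑ S ∈ powersetCard ℓ univ, #{f ∈ F | Q f ⊆ S} ^ 2 =
      ∑ f ∈ F, ∑ f' ∈ F, #{S ∈ powersetCard ℓ univ | Q f ∪ Q f' ⊆ S} := by
    simp only [sq, card_filter, sum_mul_sum, ← ite_and, ite_mul, one_mul, zero_mul,
      union_subset_iff]
    exact sum_comm.trans (sum_congr rfl fun f _ => sum_comm)
  rw [hpairs]
  refine sum_le_card_nsmul _ _ _ fun f hf => ?_
  refine (sum_le_sum fun f' hf' =>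
    card_filter_powersetCard_union_subset_le (hQ f hf) (hQ f' hf') hℓ).trans ?_
  simp only [sum_add_distrib, ← sum_filter, sum_const, smul_eq_mul]
  gcongr
  · exact hD₂ f hf
  · exact hD₁ f hf

theorem exists_kikuchi_matching (hℓ : 4 ≤ ℓ) (hQ : ∀ f ∈ F, #(Q f) = 2)
    (hQ' : ∀ f ∈ F, #(Q' f) = 2) (hdisj : ∀ f ∈ F, Disjoint (Q f) (Q' f))
    (hsymm : ∀ S, #{f ∈ F | Q' f ⊆ S} = #{f ∈ F | Q f ⊆ S}) {D₁ D₂ K : ℕ}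
    (hD₂ : ∀ f ∈ F, #{f' ∈ F | Q f' = Q f} ≤ D₂)
    (hD₁ : ∀ f ∈ F, #{f' ∈ F | ¬ Disjoint (Q f) (Q f')} ≤ D₁)
    (hK : 4 * (D₂ * (Fintype.card X - 2).choose (ℓ - 2) +
      D₁ * (Fintype.card X - 3).choose (ℓ - 3) + #F * (Fintype.card X - 4).choose (ℓ - 4)) ≤
        K * (Fintype.card X - 4).choose (ℓ - 2)) :
    ∃ M ⊆ kikuchiEdges F Q Q' ℓ, (M : Set (ι × Finset X)).PairwiseDisjoint
        (fun e => ({e.2, kikuchiMove (Q e.1) (Q' e.1) e.2} : Finset (Finset X))) ∧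
      #F * (Fintype.card X - 4).choose (ℓ - 2) ≤ 4 * K * #M := by
  rw [← card_kikuchiEdges (by omega) hQ hQ' hdisj]
  refine exists_pairwiseDisjoint_of_sum_sq_edgeDegree_le ?_
  have hdeg (S : Finset X) : kikuchiDegree F Q Q' ℓ S ≤ 2 * #{f ∈ F | Q f ⊆ S} := by
    rw [two_mul]
    nth_rw 2 [← hsymm]
    exact kikuchiDegree_le
  calc ∑ S, kikuchiDegree F Q Q' ℓ S ^ 2
      = ∑ S ∈ powersetCard ℓ univ, kikuchiDegree F Q Q' ℓ S ^ 2 := by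
        refine (sum_subset (subset_univ _) fun S _ hS => ?_).symm
        rw [kikuchiDegree_eq_zero (fun f hf => (hQ f hf).trans (hQ' f hf).symm)
          fun h => hS (mem_powersetCard_univ.2 h), zero_pow two_ne_zero]
    _ ≤ ∑ S ∈ powersetCard ℓ univ, 4 * #{f ∈ F | Q f ⊆ S} ^ 2 := by
        refine sum_le_sum fun S _ => (Nat.pow_le_pow_left (hdeg S) 2).trans_eq (by ring)
    _ ≤ 4 * (#F * _) := by
        rw [← mul_sum]
        exact Nat.mul_le_mul_left 4 (sum_sq_card_filter_subset_le hℓ hQ hD₂ hD₁)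
    _ ≤ #F * (K * (Fintype.card X - 4).choose (ℓ - 2)) := by
        rw [mul_left_comm]
        exact Nat.mul_le_mul_left _ hK
    _ = K * #(kikuchiEdges F Q Q' ℓ) := by
        rw [card_kikuchiEdges (by omega) hQ hQ' hdisj, mul_left_comm]

end Kikuchi

section Links

variable {κ α : Type*}

/-- The number of matchings `H j` that have an edge containing `A`. -/
def codegree [Fintype κ] (H : κ → Finset (Finset α)) (A : Finset α) : ℕ :=
  #{j | ∃ C ∈ H j, A ⊆ C}

/-- Two triples `{hub, left, left'}` and `{hub, right, right'}` with a common point, the second of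
which belongs to the matching of `index`. -/
structure Link (κ α : Type*) where
  index : κ
  hub : α
  left : α
  left' : α
  right : α
  right' : α

namespace Link

instance [Fintype κ] [Fintype α] : Fintype (Link κ α) :=
  Fintype.ofInjective (fun f => (f.index, f.hub, f.left, f.left', f.right, f.right'))
    fun f g h => by
      cases f
      cases g
      simpa using h

/-- The link with the roles of `left, right` and `left', right'` exchanged. -/
def swap (f : Link κ α) : Link κ α :=
  ⟨f.index, f.hub, f.left', f.left, f.right', f.right⟩

variable [DecidableEq α]

/-- The pair of elements that the Kikuchi edge of `f` removes. Left points are placed in the first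
copy of `α` and right points in the second. -/
def source (f : Link κ α) : Finset (α ⊕ α) :=
  {Sum.inl f.left, Sum.inr f.right}

/-- The pair of elements that the Kikuchi edge of `f` adds. -/
def target (f : Link κ α) : Finset (α ⊕ α) :=
  {Sum.inl f.left', Sum.inr f.right'}

theorem card_source (f : Link κ α) : #f.source = 2 :=
  card_pair Sum.inl_ne_inr

theorem card_target (f : Link κ α) : #f.target = 2 :=
  card_pair Sum.inl_ne_inr

theorem source_eq_source_iff {f g : Link κ α} :
    f.source = g.source ↔ f.left = g.left ∧ f.right = g.right := by
  simp [Finset.ext_iff, source]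

theorem not_disjoint_source_iff {f g : Link κ α} :
    ¬ Disjoint f.source g.source ↔ f.left = g.left ∨ f.right = g.right := by
  simp [source, imp_iff_not_or, eq_comm]

end Link

variable [DecidableEq α]

theorem ne_of_card_eq_three {u v w : α} (h : #({u, v, w} : Finset α) = 3) :
    u ≠ v ∧ u ≠ w ∧ v ≠ w := by
  have hpair (a b : α) : ({u, v, w} : Finset α) ≠ {a, b} := fun hab => by
    have hle := card_le_two (a := a) (b := b)
    rw [← hab, h] at hle
    omega
  refine ⟨?_, ?_, ?_⟩
  · rintro rfl
    exact hpair u w (by simp)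
  · rintro rfl
    exact hpair v u (by simp)
  · rintro rfl
    exact hpair u v (by simp)

theorem exists_eq_of_mem_of_card_eq_three {C : Finset α} (hC : #C = 3) {u : α} (hu : u ∈ C) :
    ∃ v w, C = {u, v, w} := by
  obtain ⟨v, w, -, hvw⟩ := card_eq_two.1 ((card_erase_of_mem hu).trans (by rw [hC]))
  exact ⟨v, w, by rw [← hvw, insert_erase hu]⟩

theorem eq_of_triple_eq {u v w w' : α} (h : #({u, v, w} : Finset α) = 3)
    (hww' : ({u, v, w} : Finset α) = {u, v, w'}) : w = w' := by
  obtain ⟨-, huw, hvw⟩ := ne_of_card_eq_three h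
  have hw : w ∈ ({u, v, w'} : Finset α) := hww' ▸ by simp
  simpa [huw.symm, hvw.symm] using hw

variable [Fintype α]

/-- The ordered pairs that complete `x` to a triple of `T`. -/
def completions (T : Finset (Finset α)) (x : α) : Finset (α × α) :=
  {p | {x, p.1, p.2} ∈ T}

theorem mem_completions {T : Finset (Finset α)} {x : α} {p : α × α} :
    p ∈ completions T x ↔ {x, p.1, p.2} ∈ T := by
  simp [completions]

theorem IsUniformMatching.card_completions_le {T : Finset (Finset α)}
    (hT : IsUniformMatching 3 T) (x : α) : #(completions T x) ≤ 2 := by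
  obtain hempty | ⟨⟨v, w⟩, hvw⟩ := (completions T x).eq_empty_or_nonempty
  · simp [hempty]
  rw [mem_completions] at hvw
  have hC {p : α × α} (hp : p ∈ completions T x) : ({x, p.1, p.2} : Finset α) = {x, v, w} :=
    hT.eq_of_mem (mem_completions.1 hp) hvw (mem_insert_self _ _) (mem_insert_self _ _)
  have hne {p : α × α} (hp : p ∈ completions T x) :=
    ne_of_card_eq_three (hT.card_eq _ (mem_completions.1 hp))
  calc #(completions T x) ≤ #({v, w} : Finset α) := by
        refine card_le_card_of_injOn Prod.fst (fun p hp => ?_) fun p hp p' hp' h => ?_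
        · have hp₁ : p.1 ∈ ({x, v, w} : Finset α) := hC hp ▸ by simp
          simpa [(hne hp).1.symm] using hp₁
        · refine Prod.ext h (eq_of_triple_eq (hT.card_eq _ (mem_completions.1 hp)) ?_)
          rw [hC hp, h, hC hp']
    _ ≤ 2 := card_le_two

variable {H : κ → Finset (Finset α)} {R : Finset κ} {i : κ} [Fintype κ]

/-- The links from a triple of `H i` to a triple of some `H j` with `j ∈ R`. -/
def links (H : κ → Finset (Finset α)) (R : Finset κ) (i : κ) : Finset (Link κ α) :=
  {f | f.index ∈ R ∧ {f.hub, f.left, f.left'} ∈ H i ∧ {f.hub, f.right, f.right'} ∈ H f.index}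

theorem mem_links {f : Link κ α} : f ∈ links H R i ↔ f.index ∈ R ∧
    {f.hub, f.left, f.left'} ∈ H i ∧ {f.hub, f.right, f.right'} ∈ H f.index := by
  simp [links]

theorem swap_mem_links_iff {f : Link κ α} : f.swap ∈ links H R i ↔ f ∈ links H R i := by
  simp only [mem_links, Link.swap, pair_comm f.left', pair_comm f.right']

theorem card_filter_target_subset_links (S : Finset (α ⊕ α)) :
    #{f ∈ links H R i | f.target ⊆ S} = #{f ∈ links H R i | f.source ⊆ S} := by
  refine card_nbij' Link.swap Link.swap ?_ ?_ (fun _ _ => rfl) fun _ _ => rfl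
  all_goals
    intro f hf
    simp only [coe_filter, Set.mem_ofPred_eq, swap_mem_links_iff] at hf ⊢
    exact hf

theorem card_links_filter_left_le (hH : ∀ j, IsUniformMatching 3 (H j)) (x : α) :
    #{f ∈ links H R i | f.left = x} ≤ 4 * Fintype.card κ := by
  let T := (completions (H i) x ×ˢ (univ : Finset κ)).sigma fun p => completions (H p.2) p.1.1
  have hT : #T ≤ #(completions (H i) x ×ˢ (univ : Finset κ)) * 2 := by
    rw [card_sigma]
    exact sum_le_card_nsmul _ _ _ fun p _ => (hH p.2).card_completions_le p.1.1
  calc #{f ∈ links H R i | f.left = x} ≤ #T := by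
        refine card_le_card_of_injOn
          (fun f => ⟨((f.hub, f.left'), f.index), (f.right, f.right')⟩) ?_ ?_
        · rintro ⟨j, u, v, v', w, w'⟩ hf
          simp only [coe_filter, Set.mem_ofPred_eq, mem_links] at hf
          obtain ⟨⟨-, hv, hw⟩, rfl⟩ := hf
          simpa [T, mem_completions, insert_comm v u] using And.intro hv hw
        · rintro ⟨j, u, v, v', w, w'⟩ hf ⟨j', u', x, x', z, z'⟩ hg h
          simp only [coe_filter, Set.mem_ofPred_eq] at hf hg
          simp_all
    _ ≤ #(completions (H i) x) * Fintype.card κ * 2 := by rwa [card_product] at hT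
    _ ≤ 2 * Fintype.card κ * 2 := by gcongr; exact (hH i).card_completions_le x
    _ = 4 * Fintype.card κ := by ring

theorem card_links_filter_right_le (hH : ∀ j, IsUniformMatching 3 (H j)) (z : α) :
    #{f ∈ links H R i | f.right = z} ≤ 4 * Fintype.card κ := by
  let T := ((univ : Finset κ).sigma fun j => completions (H j) z).sigma fun p =>
    completions (H i) p.2.1
  calc #{f ∈ links H R i | f.right = z} ≤ #T := by
        refine card_le_card_of_injOn
          (fun f => ⟨⟨f.index, (f.hub, f.right')⟩, (f.left, f.left')⟩) ?_ ?_
        · rintro ⟨j, u, v, v', w, w'⟩ hf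
          simp only [coe_filter, Set.mem_ofPred_eq, mem_links] at hf
          obtain ⟨⟨-, hv, hw⟩, rfl⟩ := hf
          simpa [T, mem_completions, insert_comm w u] using And.intro hw hv
        · rintro ⟨j, u, v, v', w, w'⟩ hf ⟨j', u', x, x', z, z'⟩ hg h
          simp only [coe_filter, Set.mem_ofPred_eq] at hf hg
          simp_all
    _ ≤ #((univ : Finset κ).sigma fun j => completions (H j) z) * 2 := by
        rw [card_sigma]
        exact sum_le_card_nsmul _ _ _ fun p _ => (hH i).card_completions_le p.2.1
    _ ≤ Fintype.card κ * 2 * 2 := by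
        rw [card_sigma]
        gcongr
        exact sum_le_card_nsmul _ _ _ fun j _ => (hH j).card_completions_le z
    _ = 4 * Fintype.card κ := by ring

theorem card_links_le (hH : ∀ j, IsUniformMatching 3 (H j)) :
    #(links H R i) ≤ 4 * Fintype.card κ * Fintype.card α :=
  card_le_mul_card_image_of_maps_to (f := Link.left) (t := univ) (fun _ _ => mem_univ _) _
    fun x _ => card_links_filter_left_le hH x

theorem card_completions_with_index_le (hH : ∀ j, IsUniformMatching 3 (H j)) {d : ℕ}
    (hd : ∀ A : Finset α, #A = 2 → codegree H A ≤ d) (u z : α) :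
    #{p : κ × α | {u, z, p.2} ∈ H p.1} ≤ d := by
  by_cases huz : u = z
  · have hempty : univ.filter (fun p : κ × α => {u, z, p.2} ∈ H p.1) = ∅ :=
      filter_eq_empty_iff.2 fun p _ hp => (ne_of_card_eq_three ((hH p.1).card_eq _ hp)).1 huz
    simp [hempty]
  refine le_trans (card_le_card_of_injOn Prod.fst ?_ ?_) (hd {u, z} (card_pair huz))
  · intro p hp
    simp only [coe_filter, mem_univ, true_and, Set.mem_ofPred_eq] at hp ⊢
    exact ⟨_, hp, insert_subset_insert _ (singleton_subset_iff.2 (mem_insert_self _ _))⟩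
  · intro p hp p' hp' h
    simp only [coe_filter, mem_univ, true_and, Set.mem_ofPred_eq] at hp hp'
    rw [← h] at hp'
    exact Prod.ext h (eq_of_triple_eq ((hH p.1).card_eq _ hp)
      ((hH p.1).eq_of_mem hp hp' (mem_insert_self _ _) (mem_insert_self _ _)))

theorem card_links_filter_left_right_le (hH : ∀ j, IsUniformMatching 3 (H j)) {d : ℕ}
    (hd : ∀ A : Finset α, #A = 2 → codegree H A ≤ d) (x z : α) :
    #{f ∈ links H R i | f.left = x ∧ f.right = z} ≤ 2 * d := by
  let T := (completions (H i) x).sigma fun p => {r : κ × α | {p.1, z, r.2} ∈ H r.1}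
  calc #{f ∈ links H R i | f.left = x ∧ f.right = z} ≤ #T := by
        refine card_le_card_of_injOn (fun f => ⟨(f.hub, f.left'), (f.index, f.right')⟩) ?_ ?_
        · rintro ⟨j, u, v, v', w, w'⟩ hf
          simp only [coe_filter, Set.mem_ofPred_eq, mem_links] at hf
          obtain ⟨⟨-, hv, hw⟩, rfl, rfl⟩ := hf
          simpa [T, mem_completions, insert_comm v u] using And.intro hv hw
        · rintro ⟨j, u, v, v', w, w'⟩ hf ⟨j', u', x, x', z, z'⟩ hg h
          simp only [coe_filter, Set.mem_ofPred_eq] at hf hg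
          simp_all
    _ ≤ #(completions (H i) x) * d := by
        rw [card_sigma]
        exact sum_le_card_nsmul _ _ _ fun p _ => card_completions_with_index_le hH hd p.1 z
    _ ≤ 2 * d := Nat.mul_le_mul_right d ((hH i).card_completions_le x)

theorem sum_card_inter_le_card_links (hH : ∀ j, IsUniformMatching 3 (H j)) :
    ∑ j ∈ R, #((H i).biUnion id ∩ (H j).biUnion id) ≤ #(links H R i) := by
  rw [← card_sigma]
  refine card_le_card_of_surjOn (fun f => ⟨f.index, f.hub⟩) ?_
  rintro ⟨j, u⟩ hju
  simp only [coe_sigma, Set.mem_sigma_iff, mem_coe, mem_inter, mem_biUnion, id] at hju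
  obtain ⟨hj, ⟨C, hC, huC⟩, D, hD, huD⟩ := hju
  obtain ⟨v, v', rfl⟩ := exists_eq_of_mem_of_card_eq_three ((hH i).card_eq C hC) huC
  obtain ⟨w, w', rfl⟩ := exists_eq_of_mem_of_card_eq_three ((hH j).card_eq D hD) huD
  exact ⟨⟨j, u, v, v', w, w'⟩, mem_links.2 ⟨hj, hC, hD⟩, rfl⟩

end Links

section SubsetSum

variable {κ V : Type*}

/-- The code whose symbol at a set `S` of positions is the sum of the symbols of `y` on `S`. -/
def subsetSumCode (y : (κ → ZMod 2) →ₗ[ZMod 2] (V → ZMod 2)) :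
    (κ → ZMod 2) →ₗ[ZMod 2] (Finset V → ZMod 2) :=
  LinearMap.pi fun S => ∑ v ∈ S, LinearMap.proj v ∘ₗ y

theorem subsetSumCode_apply (y : (κ → ZMod 2) →ₗ[ZMod 2] (V → ZMod 2)) (b : κ → ZMod 2)
    (S : Finset V) : subsetSumCode y b S = ∑ v ∈ S, y b v := by
  simp [subsetSumCode]

/-- The code for messages supported on `L`, with every codeword written down twice. -/
def doubledRestriction (L : Finset κ) (y : (κ → ZMod 2) →ₗ[ZMod 2] (V → ZMod 2)) :
    (L → ZMod 2) →ₗ[ZMod 2] (V ⊕ V → ZMod 2) :=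
  LinearMap.funLeft (ZMod 2) (ZMod 2) (Sum.elim id id) ∘ₗ y ∘ₗ
    Function.ExtendByZero.linearMap (ZMod 2) (Subtype.val : L → κ)

end SubsetSum

section Repetition

variable {κ : Type*} [Fintype κ]

theorem exists_isLinearWLDC_two_of_mul_card_le [Nonempty κ] {N : ℕ} {δ : ℝ} (hN : 2 ≤ N)
    (hδ : δ * Fintype.card κ ≤ 1 / 3) : ∃ Enc, IsLinearWLDC 2 (Fintype.card κ) N δ Enc := by
  classical
  obtain ⟨i₀⟩ := ‹Nonempty κ›
  -- For such a small `δ` it is enough to repeat the message bit `i₀`.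
  refine exists_isLinearWLDC_two (V := Bool × Fin (N / 2)) (U := univ)
    (y := LinearMap.pi fun v => if v.1 then LinearMap.proj i₀ else 0)
    (M := fun i => if i = i₀ then univ else ∅) (s := fun t => (false, t))
    (t := fun t => (true, t)) (fun i t _ t' _ hne => ?_) (fun i t _ => by simp) (fun i t ht b => ?_)
    (by simp; omega) (fun i t _ => by simp) ?_
  · simp [Function.onFun, hne.symm]
  · obtain rfl : i = i₀ := by
      by_contra h
      simp [h] at ht
    simp
  · have hN' : (N : ℝ) ≤ 3 * (N / 2 : ℕ) := by exact_mod_cast (by omega : N ≤ 3 * (N / 2))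
    simp only [apply_ite card, card_univ, Fintype.card_fin, card_empty, Nat.cast_ite, Nat.cast_zero,
      sum_ite_eq', mem_univ, if_true]
    nlinarith [Nat.cast_nonneg (α := ℝ) N]

end Repetition

section LinkMatchings

variable {κ α : Type*} [Fintype κ] [Fintype α] [DecidableEq α]
  {H : κ → Finset (Finset α)} {R : Finset κ} {i : κ} {f : Link κ α}

theorem disjoint_source_target (hH : ∀ j, IsUniformMatching 3 (H j)) (hf : f ∈ links H R i) :
    Disjoint f.source f.target := by
  rw [mem_links] at hf
  have hl := (ne_of_card_eq_three ((hH _).card_eq _ hf.2.1)).2.2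
  have hr := (ne_of_card_eq_three ((hH _).card_eq _ hf.2.2)).2.2
  simp [Link.source, Link.target, hl.symm, hr.symm]

theorem card_links_filter_source_eq_le (hH : ∀ j, IsUniformMatching 3 (H j)) {d : ℕ}
    (hd : ∀ A : Finset α, #A = 2 → codegree H A ≤ d) (f : Link κ α) :
    #{g ∈ links H R i | g.source = f.source} ≤ 2 * d := by
  simp only [Link.source_eq_source_iff]
  exact card_links_filter_left_right_le hH hd f.left f.right

theorem card_links_filter_not_disjoint_source_le (hH : ∀ j, IsUniformMatching 3 (H j))
    (f : Link κ α) :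
    #{g ∈ links H R i | ¬ Disjoint f.source g.source} ≤ 8 * Fintype.card κ := by
  simp only [Link.not_disjoint_source_iff, filter_or, eq_comm (a := f.left),
    eq_comm (a := f.right)]
  have hleft := card_links_filter_left_le (R := R) (i := i) hH f.left
  have hright := card_links_filter_right_le (R := R) (i := i) hH f.right
  exact (card_union_le _ _).trans (by omega)

theorem exists_kikuchi_matching_links (hH : ∀ j, IsUniformMatching 3 (H j)) {d ℓ : ℕ}
    (hd : ∀ A : Finset α, #A = 2 → codegree H A ≤ d) (hd₀ : 0 < d) (hℓ : 4 ≤ ℓ)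
    (hℓα : 2 * ℓ ≤ Fintype.card α) (hub : Fintype.card κ * ℓ ^ 2 ≤ Fintype.card α)
    (R : Finset κ) (i : κ) :
    ∃ M ⊆ kikuchiEdges (links H R i) Link.source Link.target ℓ,
      (M : Set (Link κ α × Finset (α ⊕ α))).PairwiseDisjoint
        (fun e => ({e.2, kikuchiMove e.1.source e.1.target e.2} : Finset (Finset (α ⊕ α)))) ∧
      #(links H R i) * (2 * Fintype.card α - 4).choose (ℓ - 2) ≤ 128 * d * #M := by
  have hcard : Fintype.card (α ⊕ α) = 2 * Fintype.card α := by rw [Fintype.card_sum, two_mul]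
  have hmoment := kikuchi_second_moment_le hd₀ hℓ hℓα hub
  have hlinks : #(links H R i) ≤ 4 * (Fintype.card α * Fintype.card κ) :=
    (card_links_le hH).trans_eq (by ring)
  obtain ⟨M, hM, hdisj, hle⟩ := exists_kikuchi_matching hℓ (fun f _ => f.card_source)
    (fun f _ => f.card_target) (fun f hf => disjoint_source_target hH hf)
    (card_filter_target_subset_links (H := H) (R := R) (i := i)) (K := 32 * d)
    (fun f _ => card_links_filter_source_eq_le hH hd f)
    (fun f _ => card_links_filter_not_disjoint_source_le hH f) (by
      rw [hcard]
      refine le_trans ?_ hmoment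
      gcongr)
  exact ⟨M, hM, hdisj, by rw [hcard] at hle; linarith⟩

theorem IsDecodingFamily.sum_source_add_sum_target
    {y : (κ → ZMod 2) →ₗ[ZMod 2] (α → ZMod 2)} (hH : IsDecodingFamily 3 y H)
    (hf : f ∈ links H R i) (b : κ → ZMod 2) :
    y b f.left + y b f.right + (y b f.left' + y b f.right') = b i + b f.index := by
  obtain ⟨-, hl, hr⟩ := mem_links.1 hf
  have hsum {j : κ} {u v w : α} (h : {u, v, w} ∈ H j) : y b u + (y b v + y b w) = b j := by
    obtain ⟨huv, huw, hvw⟩ := ne_of_card_eq_three ((hH.matching j).card_eq _ h)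
    rw [← hH.sum_eq j _ h b, sum_insert (by simp [huv, huw]), sum_pair hvw]
  linear_combination hsum hl + hsum hr - CharTwo.add_self_eq_zero (y b f.hub)

theorem IsDecodingFamily.subsetSumCode_add_kikuchiMove [DecidableEq κ] {ℓ : ℕ}
    {y : (κ → ZMod 2) →ₗ[ZMod 2] (α → ZMod 2)} (hH : IsDecodingFamily 3 y H) {L : Finset κ}
    {i : L} {e : Link κ α × Finset (α ⊕ α)}
    (he : e ∈ kikuchiEdges (links H Lᶜ i) Link.source Link.target ℓ) (b : L → ZMod 2) :
    subsetSumCode (doubledRestriction L y) b e.2 +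
      subsetSumCode (doubledRestriction L y) b (kikuchiMove e.1.source e.1.target e.2) = b i := by
  obtain ⟨hf, -, hsub, hdisj⟩ := mem_kikuchiEdges.1 he
  have hi : Function.ExtendByZero.linearMap (ZMod 2) (Subtype.val : L → κ) b (i : κ) = b i :=
    Subtype.val_injective.extend_apply b 0 i
  have hindex : Function.ExtendByZero.linearMap (ZMod 2) (Subtype.val : L → κ) b e.1.index = 0 :=
    Function.extend_apply' _ _ _ fun ⟨j, hj⟩ =>
      mem_compl.1 (mem_links.1 hf).1 (hj ▸ j.2)
  rw [subsetSumCode_apply, subsetSumCode_apply, sum_add_sum_kikuchiMove hsub hdisj, Link.source,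
    Link.target, sum_pair Sum.inl_ne_inr, sum_pair Sum.inl_ne_inr]
  exact (hH.sum_source_add_sum_target hf _).trans (by rw [hi, hindex, add_zero])

theorem exists_sq_sum_card_le_sum_card_links [DecidableEq κ]
    (hH : ∀ j, IsUniformMatching 3 (H j))
    (hm : 2 * Fintype.card α ≤ 3 * ∑ i, #(H i)) :
    ∃ L : Finset κ, Fintype.card κ ≤ 2 * #L ∧
      9 * (∑ i, #(H i)) ^ 2 ≤ 8 * Fintype.card α * ∑ i ∈ L, #(links H Lᶜ i) := by
  obtain ⟨L, hL, hcut⟩ := exists_large_half_cut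
    (w := fun i j => #((H i).biUnion id ∩ (H j).biUnion id)) fun i j => by rw [inter_comm]
  refine ⟨L, hL, ?_⟩
  have hcs := sq_sum_card_le_card_mul_sum_card_inter fun i => (H i).biUnion id
  simp only [inter_self, (hH _).card_biUnion, ← mul_sum] at hcut hcs
  have hlinks : ∑ i ∈ L, ∑ j ∈ Lᶜ, #((H i).biUnion id ∩ (H j).biUnion id) ≤
      ∑ i ∈ L, #(links H Lᶜ i) :=
    sum_le_sum fun i _ => sum_card_inter_le_card_links hH
  set m := ∑ i, #(H i)
  have hbound : (3 * m) ^ 2 ≤ Fintype.card α * (4 * ∑ i ∈ L, #(links H Lᶜ i) + 3 * m) :=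
    hcs.trans (Nat.mul_le_mul_left _ (by omega))
  nlinarith

theorem exists_kikuchi_matchings_links [DecidableEq κ] (hH : ∀ j, IsUniformMatching 3 (H j))
    {d ℓ : ℕ} (hd : ∀ A : Finset α, #A = 2 → codegree H A ≤ d) (hd₀ : 0 < d) (hℓ : 4 ≤ ℓ)
    (hℓα : 2 * ℓ ≤ Fintype.card α) (hub : Fintype.card κ * ℓ ^ 2 ≤ Fintype.card α)
    (hlb : Fintype.card α ≤ 4 * (Fintype.card κ * ℓ ^ 2))
    (hm : 2 * Fintype.card α ≤ 3 * ∑ i, #(H i)) :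
    ∃ (L : Finset κ) (M : κ → Finset (Link κ α × Finset (α ⊕ α))), Fintype.card κ ≤ 2 * #L ∧
      (∀ i, M i ⊆ kikuchiEdges (links H Lᶜ i) Link.source Link.target ℓ) ∧
      (∀ i, (M i : Set (Link κ α × Finset (α ⊕ α))).PairwiseDisjoint fun e =>
        ({e.2, kikuchiMove e.1.source e.1.target e.2} : Finset (Finset (α ⊕ α)))) ∧
      (2 * Fintype.card α).choose ℓ * (9 * (∑ i, #(H i)) ^ 2) ≤
        65536 * (Fintype.card α ^ 2 * Fintype.card κ * d) * ∑ i ∈ L, #(M i) := by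
  obtain ⟨L, hL, hlinks⟩ := exists_sq_sum_card_le_sum_card_links hH hm
  choose M hM hdisj hcard using exists_kikuchi_matching_links hH hd hd₀ hℓ hℓα hub Lᶜ
  refine ⟨L, M, hL, hM, hdisj, ?_⟩
  set n := Fintype.card α
  set k := Fintype.card κ
  have hM_total : (∑ i ∈ L, #(links H Lᶜ i)) * (2 * n - 4).choose (ℓ - 2) ≤
      128 * d * ∑ i ∈ L, #(M i) := by
    rw [sum_mul, mul_sum]
    exact sum_le_sum fun i _ => hcard i
  calc (2 * n).choose ℓ * (9 * (∑ i, #(H i)) ^ 2)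
      ≤ 64 * (n * k) * (2 * n - 4).choose (ℓ - 2) * (8 * n * ∑ i ∈ L, #(links H Lᶜ i)) :=
        Nat.mul_le_mul (choose_le_mul_choose_sub_four (by omega) hℓα hlb) hlinks
    _ = 512 * (n ^ 2 * k) * ((∑ i ∈ L, #(links H Lᶜ i)) * (2 * n - 4).choose (ℓ - 2)) := by ring
    _ ≤ 512 * (n ^ 2 * k) * (128 * d * ∑ i ∈ L, #(M i)) := Nat.mul_le_mul_left _ hM_total
    _ = 65536 * (n ^ 2 * k * d) * ∑ i ∈ L, #(M i) := by ring

end LinkMatchings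

section LightReduction

variable {κ α : Type*} [Fintype κ] [Fintype α] {H : κ → Finset (Finset α)}

theorem IsDecodingFamily.exists_isLinearWLDC_choose_of_card_le {d ℓ : ℕ} {δ : ℝ}
    {y : (κ → ZMod 2) →ₗ[ZMod 2] (α → ZMod 2)} (hH : IsDecodingFamily 3 y H)
    (hd : ∀ A : Finset α, #A = 2 → codegree H A ≤ d) (hd₀ : 0 < d) (hℓ : 4 ≤ ℓ)
    (hℓα : 2 * ℓ ≤ Fintype.card α) (hub : Fintype.card κ * ℓ ^ 2 ≤ Fintype.card α)
    (hlb : Fintype.card α ≤ 4 * (Fintype.card κ * ℓ ^ 2))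
    (hm : 2 * Fintype.card α ≤ 3 * ∑ i, #(H i)) (hδ₀ : 0 ≤ δ)
    (hδ : δ * Fintype.card α * Fintype.card κ ≤ ∑ i, (#(H i) : ℝ)) :
    ∃ k₃ Enc, Fintype.card κ ≤ 2 * k₃ ∧
      IsLinearWLDC 2 k₃ ((2 * Fintype.card α).choose ℓ) (δ ^ 2 / (8192 * d)) Enc := by
  classical
  obtain ⟨L, M, hL, hM, hdisj, hcard⟩ :=
    exists_kikuchi_matchings_links hH.matching hd hd₀ hℓ hℓα hub hlb hm
  have hmem {i : κ} {e} (he : e ∈ M i) := mem_kikuchiEdges.1 (hM i he)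
  have hsize : δ ^ 2 / (8192 * d) * (2 * Fintype.card α).choose ℓ * Fintype.card L ≤
      ∑ i : L, (#(M i) : ℝ) := by
    have hn : (0 : ℝ) < Fintype.card α := by exact_mod_cast (show 0 < Fintype.card α by omega)
    have hk : (0 : ℝ) < Fintype.card κ := by
      refine Nat.cast_pos.2 (Nat.pos_of_ne_zero fun hk => ?_)
      rw [hk] at hlb
      omega
    have hL' : (Fintype.card L : ℝ) ≤ Fintype.card κ := by
      exact_mod_cast Fintype.card_subtype_le _
    rw [sum_coe_sort L fun i => (#(M i) : ℝ), div_mul_eq_mul_div, div_mul_eq_mul_div,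
      div_le_iff₀ (by positivity)]
    refine le_of_mul_le_mul_left (a := 8 * ((Fintype.card α : ℝ) ^ 2 * Fintype.card κ)) ?_
      (by positivity)
    calc _ ≤ 8 * ((Fintype.card α : ℝ) ^ 2 * Fintype.card κ) *
          (δ ^ 2 * (2 * Fintype.card α).choose ℓ * Fintype.card κ) := by gcongr
      _ = (2 * Fintype.card α).choose ℓ * (8 * (δ * Fintype.card α * Fintype.card κ) ^ 2) := by
          ring
      _ ≤ (2 * Fintype.card α).choose ℓ * (9 * (∑ i, (#(H i) : ℝ)) ^ 2) := by
          gcongr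
          norm_num
      _ ≤ 65536 * ((Fintype.card α : ℝ) ^ 2 * Fintype.card κ * d) * ∑ i ∈ L, (#(M i) : ℝ) := by
          exact_mod_cast hcard
      _ = _ := by ring
  obtain ⟨Enc, hEnc⟩ := exists_isLinearWLDC_two (U := powersetCard ℓ univ)
    (y := subsetSumCode (doubledRestriction L y)) (M := fun i : L => M i) (s := Prod.snd)
    (t := fun e => kikuchiMove e.1.source e.1.target e.2) (fun i => hdisj i)
    (fun i e he => (kikuchiMove_ne (hmem he).2.2.2 (by simp [Link.target])).symm)
    (fun i e he => hH.subsetSumCode_add_kikuchiMove (hM i he))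
    (by rw [card_powersetCard, card_univ, Fintype.card_sum, two_mul])
    (fun i e he => ⟨mem_powersetCard_univ.2 (hmem he).2.1, mem_powersetCard_univ.2 <|
      (card_kikuchiMove (hmem he).2.2.1 (hmem he).2.2.2
        (e.1.card_source.trans e.1.card_target.symm)).trans (hmem he).2.1⟩) hsize
  exact ⟨_, Enc, by rwa [Fintype.card_coe], hEnc⟩

theorem IsDecodingFamily.exists_isLinearWLDC_choose {d ℓ : ℕ} {δ : ℝ} [Nonempty κ]
    {y : (κ → ZMod 2) →ₗ[ZMod 2] (α → ZMod 2)} (hH : IsDecodingFamily 3 y H)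
    (hd : ∀ A : Finset α, #A = 2 → codegree H A ≤ d) (hd₀ : 0 < d) (hℓ : 4 ≤ ℓ)
    (hub : Fintype.card κ * ℓ ^ 2 ≤ Fintype.card α)
    (hlb : Fintype.card α ≤ 4 * (Fintype.card κ * ℓ ^ 2)) (hδ₀ : 0 ≤ δ)
    (hδ : δ * Fintype.card α * Fintype.card κ ≤ ∑ i, (#(H i) : ℝ)) :
    ∃ k₃ Enc, Fintype.card κ ≤ 2 * k₃ ∧
      IsLinearWLDC 2 k₃ ((2 * Fintype.card α).choose ℓ) (δ ^ 2 / (8192 * d)) Enc := by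
  classical
  have hℓα : 2 * ℓ ≤ Fintype.card α := by
    have hκ : 0 < Fintype.card κ := Fintype.card_pos
    nlinarith
  obtain hm | hm := le_or_gt (2 * Fintype.card α) (3 * ∑ i, #(H i))
  · exact hH.exists_isLinearWLDC_choose_of_card_le hd hd₀ hℓ hℓα hub hlb hm hδ₀ hδ
  have hN : 2 ≤ (2 * Fintype.card α).choose ℓ := by
    have h := Nat.choose_le_choose ℓ (show ℓ + 1 ≤ 2 * Fintype.card α by omega)
    rw [Nat.choose_succ_self_right] at h
    omega
  have hα : (0 : ℝ) < Fintype.card α := by exact_mod_cast (show 0 < Fintype.card α by omega)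
  have hd₁ : (1 : ℝ) ≤ d := by exact_mod_cast hd₀
  have hκ : (1 : ℝ) ≤ Fintype.card κ := by exact_mod_cast Fintype.card_pos (α := κ)
  have hδκ : δ * Fintype.card κ ≤ 1 := by
    have hm' : 3 * ∑ i, (#(H i) : ℝ) < 2 * Fintype.card α := by exact_mod_cast hm
    refine le_of_mul_le_mul_right ?_ hα
    linarith
  have hδ₁ : δ ≤ 1 := (le_mul_of_one_le_right hδ₀ hκ).trans hδκ
  obtain ⟨Enc, hEnc⟩ := exists_isLinearWLDC_two_of_mul_card_le (κ := κ) hN (δ := δ ^ 2 / (8192 * d))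
    (by
      rw [div_mul_eq_mul_div, div_le_iff₀ (by positivity), sq, mul_assoc]
      nlinarith [mul_le_one₀ hδ₁ (by positivity) hδκ])
  exact ⟨_, Enc, by omega, hEnc⟩

end LightReduction

section HeavyReduction

variable {κ α : Type*} [Fintype κ] {H : κ → Finset (Finset α)} {d : ℕ}

/-- A set is heavy if it contains a pair of codegree greater than `d`. -/
def IsHeavy (H : κ → Finset (Finset α)) (d : ℕ) (C : Finset α) : Prop :=
  ∃ A ⊆ C, #A = 2 ∧ d < codegree H A

theorem codegree_filter_not_isHeavy_le {A : Finset α} (hA : #A = 2) :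
    codegree (fun i => {C ∈ H i | ¬ IsHeavy H d C}) A ≤ d := by
  by_contra! hlt
  have hle : codegree (fun i => {C ∈ H i | ¬ IsHeavy H d C}) A ≤ codegree H A :=
    card_le_card (monotone_filter_right _ fun j _ ⟨C, hC, hAC⟩ => ⟨C, (mem_filter.1 hC).1, hAC⟩)
  obtain ⟨j, hj⟩ := card_pos.1 ((Nat.zero_le d).trans_lt hlt)
  obtain ⟨C, hC, hAC⟩ := (mem_filter.1 hj).2
  exact (mem_filter.1 hC).2 ⟨A, hAC, hA, hlt.trans_le hle⟩

variable [Fintype α]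

theorem mul_card_filter_lt_codegree_le (hH : ∀ i, IsUniformMatching 3 (H i)) (d : ℕ) :
    d * #{A ∈ powersetCard 2 univ | d < codegree H A} ≤ Fintype.card α * Fintype.card κ := by
  classical
  set P : Finset (Finset α) := {A ∈ powersetCard 2 univ | d < codegree H A}
  have hpairs (j : κ) : #{A ∈ P | ∃ C ∈ H j, A ⊆ C} ≤ Fintype.card α := by
    have hsub : P.filter (fun A => ∃ C ∈ H j, A ⊆ C) ⊆ (H j).biUnion (powersetCard 2) := by
      intro A hA
      simp only [P, mem_filter, mem_powersetCard, subset_univ, true_and] at hA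
      obtain ⟨⟨hA₂, -⟩, C, hC, hAC⟩ := hA
      exact mem_biUnion.2 ⟨C, hC, mem_powersetCard.2 ⟨hAC, hA₂⟩⟩
    calc _ ≤ #((H j).biUnion (powersetCard 2)) := card_le_card hsub
      _ ≤ #(H j) * 3 := card_biUnion_le_card_mul _ _ 3 fun C hC => by
          rw [card_powersetCard, (hH j).card_eq C hC]
          rfl
      _ ≤ Fintype.card α := (mul_comm _ _).trans_le (hH j).mul_card_le
  calc d * #P ≤ ∑ A ∈ P, codegree H A := by
        rw [mul_comm]
        exact card_nsmul_le_sum P _ d fun A hA => (mem_filter.1 hA).2.le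
    _ = ∑ j, #{A ∈ P | ∃ C ∈ H j, A ⊆ C} := by
        simp only [codegree, card_filter]
        exact sum_comm
    _ ≤ Fintype.card κ * Fintype.card α := sum_le_card_nsmul _ _ _ fun j _ => hpairs j
    _ = Fintype.card α * Fintype.card κ := mul_comm _ _

theorem exists_card_le_mul_card_le_max_mul_card_filter {ι β : Type*} [DecidableEq β]
    {Q : Finset ι} {f : ι → β} {P : Finset β} (hf : ∀ q ∈ Q, f q ∈ P) (t : ℕ) :
    ∃ P' : Finset β, #P' ≤ t ∧ t * #Q ≤ max t #P * #{q ∈ Q | f q ∈ P'} := by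
  obtain ⟨P', -, hcard, hle⟩ :=
    exists_subset_card_le_mul_sum_le_max_mul_sum P (fun x => #{q ∈ Q | f q = x}) t
  rw [← card_eq_sum_card_fiberwise hf, sum_card_fiberwise_eq_card_filter] at hle
  exact ⟨P', hcard, hle⟩

theorem exists_card_le_half_mul_card_le_mul_card_filter {ι β γ : Type*} [DecidableEq β]
    [DecidableEq γ] {Q : Finset ι} {f : ι → β} {g : ι → γ} {P : Finset β} {R : Finset γ}
    {n k d : ℕ} (hf : ∀ q ∈ Q, f q ∈ P) (hg : ∀ q ∈ Q, g q ∈ R) (hn : 2 ≤ n)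
    (hP : d * #P ≤ n * k) (hR : #R ≤ n) :
    ∃ (P' : Finset β) (R' : Finset γ), #P' ≤ n / 2 ∧ #R' ≤ n / 2 ∧
      d * #Q ≤ 9 * (d + k) * #{q ∈ Q | f q ∈ P' ∧ g q ∈ R'} := by
  have ht : 0 < n / 2 := by omega
  have hnt : n ≤ 3 * (n / 2) := by omega
  obtain ⟨P', hP', hQP⟩ := exists_card_le_mul_card_le_max_mul_card_filter hf (n / 2)
  obtain ⟨R', hR', hQR⟩ := exists_card_le_mul_card_le_max_mul_card_filter
    (Q := {q ∈ Q | f q ∈ P'}) (fun q hq => hg q (mem_filter.1 hq).1) (n / 2)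
  refine ⟨P', R', hP', hR', ?_⟩
  rw [filter_filter] at hQR
  set t := n / 2
  have hmax : d * max t #P ≤ t * (d + 3 * k) := by
    rw [← Nat.mul_max_mul_left]
    refine max_le (by nlinarith) (hP.trans ?_)
    nlinarith
  have hstepP : d * #Q ≤ (d + 3 * k) * #{q ∈ Q | f q ∈ P'} := by
    refine Nat.le_of_mul_le_mul_left ?_ ht
    nlinarith
  have hstepR : #{q ∈ Q | f q ∈ P'} ≤ 3 * #{q ∈ Q | f q ∈ P' ∧ g q ∈ R'} := by
    refine Nat.le_of_mul_le_mul_left ?_ ht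
    have hmaxR : max t #R ≤ 3 * t := max_le (by omega) (hR.trans hnt)
    nlinarith
  nlinarith

theorem pairwiseDisjoint_pair_sdiff {β : Type*} [DecidableEq β] {M : Set (Finset β)}
    {A : Finset β → Finset β} (hM : M.PairwiseDisjoint id)
    (hA : ∀ C ∈ M, A C ⊂ C ∧ (A C).Nonempty) :
    M.PairwiseDisjoint fun C => ({A C, C \ A C} : Finset (Finset β)) := by
  have hpart (C) (hC : C ∈ M) (X) (hX : X ∈ ({A C, C \ A C} : Finset (Finset β))) :
      X ⊆ C ∧ X.Nonempty := by
    rw [mem_insert, mem_singleton] at hX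
    obtain rfl | rfl := hX
    · exact ⟨(hA C hC).1.subset, (hA C hC).2⟩
    · exact ⟨sdiff_subset, sdiff_nonempty.2 (hA C hC).1.not_subset⟩
  refine fun C hC D hD hne => disjoint_left.2 fun X hXC hXD => ?_
  have hdisj : Disjoint X X := (hM hC hD hne).mono (hpart C hC X hXC).1 (hpart D hD X hXD).1
  exact (hpart C hC X hXC).2.ne_empty (disjoint_self.1 hdisj)

theorem IsDecodingFamily.exists_isLinearWLDC_two_of_pairs {δ : ℝ}
    {y : (κ → ZMod 2) →ₗ[ZMod 2] (α → ZMod 2)} (hH : IsDecodingFamily 3 y H)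
    {P : Finset (Finset α)} (hP : d * #P ≤ Fintype.card α * Fintype.card κ)
    (hpair : ∀ i, ∀ C ∈ H i, ∃ A ∈ P, A ⊆ C ∧ #A = 2) (hα : 2 ≤ Fintype.card α) (hd : 0 < d)
    (hδ : δ * Fintype.card α * Fintype.card κ ≤ ∑ i, (#(H i) : ℝ)) :
    ∃ Enc, IsLinearWLDC 2 (Fintype.card κ) (Fintype.card α)
      (δ * d / (9 * (d + Fintype.card κ))) Enc := by
  classical
  have hpair' (C : Finset α) (hC : ∃ i, C ∈ H i) : ∃ A ∈ P, A ⊆ C ∧ #A = 2 :=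
    hC.elim fun i hi => hpair i C hi
  choose! A hAP hAC hA₂ using hpair'
  have hcompl {i : κ} {C : Finset α} (hC : C ∈ H i) : #(C \ A C) = 1 := by
    rw [card_sdiff_of_subset (hAC C ⟨i, hC⟩), hA₂ C ⟨i, hC⟩, (hH.matching i).card_eq C hC]
  have hA {i : κ} {C : Finset α} (hC : C ∈ H i) : A C ⊂ C ∧ (A C).Nonempty :=
    ⟨(hAC C ⟨i, hC⟩).ssubset_of_ne fun h => by simpa [h] using hcompl hC,
      card_pos.1 (two_pos.trans_eq (hA₂ C ⟨i, hC⟩).symm)⟩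
  obtain ⟨P', R', hP', hR', hcard⟩ := exists_card_le_half_mul_card_le_mul_card_filter
    (Q := univ.sigma H) (f := fun q => A q.2) (g := fun q => q.2 \ A q.2)
    (R := powersetCard 1 univ) (fun q hq => hAP q.2 ⟨q.1, (mem_sigma.1 hq).2⟩)
    (fun q hq => mem_powersetCard_univ.2 (hcompl (mem_sigma.1 hq).2)) hα hP
    (by rw [card_powersetCard, Nat.choose_one_right, card_univ])
  refine exists_isLinearWLDC_two (U := P' ∪ R') (y := subsetSumCode y)
    (M := fun i => {C ∈ H i | A C ∈ P' ∧ C \ A C ∈ R'}) (s := A) (t := fun C => C \ A C)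
    (fun i => ?_) (fun i C hC => ?_) (fun i C hC b => ?_) ((card_union_le _ _).trans (by omega))
    (fun i C hC => (mem_filter.1 hC).2.imp (mem_union_left _) (mem_union_right _)) ?_
  · exact (pairwiseDisjoint_pair_sdiff (hH.matching i).pairwiseDisjoint
      fun C hC => hA (mem_coe.1 hC)).subset (coe_subset.2 (filter_subset _ _))
  · have hCi := (mem_filter.1 hC).1
    exact fun h => absurd (congrArg card h) (by simp [hA₂ C ⟨i, hCi⟩, hcompl hCi])
  · have hCi := (mem_filter.1 hC).1
    rw [subsetSumCode_apply, subsetSumCode_apply, add_comm, sum_sdiff (hAC C ⟨i, hCi⟩),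
      hH.sum_eq i C hCi]
  · have hsum : ∑ i, #{C ∈ H i | A C ∈ P' ∧ C \ A C ∈ R'} =
        #{q ∈ univ.sigma H | A q.2 ∈ P' ∧ q.2 \ A q.2 ∈ R'} := by
      simp only [card_filter, sum_sigma]
    rw [card_sigma, ← hsum] at hcard
    have hcard' : (d : ℝ) * ∑ i, (#(H i) : ℝ) ≤ 9 * (d + Fintype.card κ) *
        ∑ i, (#{C ∈ H i | A C ∈ P' ∧ C \ A C ∈ R'} : ℝ) := by exact_mod_cast hcard
    rw [div_mul_eq_mul_div, div_mul_eq_mul_div, div_le_iff₀ (by positivity)]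
    calc δ * d * Fintype.card α * Fintype.card κ
        = d * (δ * Fintype.card α * Fintype.card κ) := by ring
      _ ≤ d * ∑ i, (#(H i) : ℝ) := by gcongr
      _ ≤ _ := hcard'.trans_eq (mul_comm _ _)

theorem IsDecodingFamily.exists_isLinearWLDC_two_of_isHeavy {δ : ℝ}
    {y : (κ → ZMod 2) →ₗ[ZMod 2] (α → ZMod 2)} (hH : IsDecodingFamily 3 y H)
    (hα : 2 ≤ Fintype.card α) (hd : 0 < d)
    (hδ : δ * Fintype.card α * Fintype.card κ ≤ ∑ i, (#{C ∈ H i | IsHeavy H d C} : ℝ)) :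
    ∃ Enc, IsLinearWLDC 2 (Fintype.card κ) (Fintype.card α)
      (δ * d / (9 * (d + Fintype.card κ))) Enc := by
  refine (hH.mono fun i => filter_subset (IsHeavy H d) (H i)).exists_isLinearWLDC_two_of_pairs
    (mul_card_filter_lt_codegree_le hH.matching d) (fun i C hC => ?_) hα hd hδ
  obtain ⟨A, hAC, hA, hdA⟩ := (mem_filter.1 hC).2
  exact ⟨A, mem_filter.2 ⟨mem_powersetCard_univ.2 hA, hdA⟩, hAC, hA⟩

end HeavyReduction

section Dichotomy

variable {κ α : Type*} [Fintype κ] [Fintype α] {d : ℕ} {δ : ℝ}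
  {y : (κ → ZMod 2) →ₗ[ZMod 2] (α → ZMod 2)} {H : κ → Finset (Finset α)}

theorem IsDecodingFamily.exists_isLinearWLDC_two_or_choose [Nonempty κ] {ℓ : ℕ}
    (hH : IsDecodingFamily 3 y H) (hd : 0 < d) (hℓ : 4 ≤ ℓ)
    (hub : Fintype.card κ * ℓ ^ 2 ≤ Fintype.card α)
    (hlb : Fintype.card α ≤ 4 * (Fintype.card κ * ℓ ^ 2)) (hδ₀ : 0 ≤ δ)
    (hδ : δ * Fintype.card α * Fintype.card κ ≤ ∑ i, (#(H i) : ℝ)) :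
    (∃ Enc, IsLinearWLDC 2 (Fintype.card κ) (Fintype.card α)
      (1 / 18 * δ * d / (d + Fintype.card κ)) Enc) ∨
    ∃ k₃ Enc, Fintype.card κ ≤ 2 * k₃ ∧
      IsLinearWLDC 2 k₃ ((2 * Fintype.card α).choose ℓ) (1 / 32768 * δ ^ 2 / d) Enc := by
  have hα : 2 ≤ Fintype.card α := by
    have hκ : 0 < Fintype.card κ := Fintype.card_pos
    nlinarith
  have hsplit : ∑ i, (#(H i) : ℝ) =
      ∑ i, (#{C ∈ H i | IsHeavy H d C} : ℝ) + ∑ i, (#{C ∈ H i | ¬ IsHeavy H d C} : ℝ) := by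
    rw [← sum_add_distrib]
    refine sum_congr rfl fun i _ => ?_
    exact_mod_cast (card_filter_add_card_filter_not (s := H i) (IsHeavy H d)).symm
  by_cases hheavy : δ / 2 * Fintype.card α * Fintype.card κ ≤
      ∑ i, (#{C ∈ H i | IsHeavy H d C} : ℝ)
  · left
    convert hH.exists_isLinearWLDC_two_of_isHeavy hα hd hheavy using 3
    rw [mul_comm (9 : ℝ), ← div_div]
    ring
  · right
    have hlight := hH.mono fun i => filter_subset (fun C => ¬ IsHeavy H d C) (H i)
    convert hlight.exists_isLinearWLDC_choose (δ := δ / 2)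
      (fun A hA => codegree_filter_not_isHeavy_le hA) hd hℓ hub hlb (by positivity) (by linarith)
      using 6
    ring

theorem floor_sqrt_div_bounds {k n : ℕ} (hk : 0 < k) (hkn : 16 * k ≤ n) :
    4 ≤ ⌊√((n : ℝ) / k)⌋₊ ∧ k * ⌊√((n : ℝ) / k)⌋₊ ^ 2 ≤ n ∧
      n ≤ 4 * (k * ⌊√((n : ℝ) / k)⌋₊ ^ 2) := by
  have hk' : (0 : ℝ) < k := by exact_mod_cast hk
  have hkn' : (16 : ℝ) * k ≤ n := by exact_mod_cast hkn
  set s := √((n : ℝ) / k)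
  have hsq : k * s ^ 2 = n := by
    rw [Real.sq_sqrt (by positivity), mul_div_cancel₀ _ hk'.ne']
  have hs : (4 : ℕ) ≤ s := by
    refine Real.le_sqrt_of_sq_le ((le_div_iff₀ hk').2 ?_)
    norm_num
    exact hkn'
  have hfloor : 4 ≤ ⌊s⌋₊ := Nat.le_floor hs
  have hle : (⌊s⌋₊ : ℝ) ≤ s := Nat.floor_le (Real.sqrt_nonneg _)
  have hge : s ≤ 2 * ⌊s⌋₊ := by
    have h4 : (4 : ℝ) ≤ ⌊s⌋₊ := by exact_mod_cast hfloor
    linarith [Nat.lt_floor_add_one s]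
  have hlower : (k : ℝ) * (⌊s⌋₊ : ℝ) ^ 2 ≤ n := by
    rw [← hsq]
    gcongr
  have hupper : (n : ℝ) ≤ 4 * (k * (⌊s⌋₊ : ℝ) ^ 2) := by
    calc (n : ℝ) = k * s ^ 2 := hsq.symm
      _ ≤ k * (2 * ⌊s⌋₊) ^ 2 := by gcongr
      _ = _ := by ring
  exact ⟨hfloor, by exact_mod_cast hlower, by exact_mod_cast hupper⟩

end Dichotomy

/-- **Black-box reduction from linear 3-LDCs to two candidate linear 2-LDCs.**
There are absolute constants `c, c₀, c₁, c₂ > 0` such that: for every linear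
`(3, δ)`-wLDC `Enc : {0,1}^k → {0,1}^n`, every positive integer `d`, and `k ≤ n/c₀`,
there exist codes `Enc₂ : {0,1}^{k₂} → {0,1}^n` and `Enc₃ : {0,1}^{k₃} → {0,1}^N`
with `k₂, k₃ ≥ k/2`, where `N = C(2n, ℓ)` and `ℓ = (√(n/k))/c`, such that either
`Enc₂` is a linear `(2, c₁ δ d/(d+k))`-wLDC or `Enc₃` is a linear
`(2, c₂ δ²/d)`-wLDC. -/
theorem linear_three_ldc_reduction :
    ∃ c c₀ c₁ c₂ : ℝ, 0 < c ∧ 0 < c₀ ∧ 0 < c₁ ∧ 0 < c₂ ∧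
      ∀ (k n d : ℕ) (δ : ℝ) (Enc : (Fin k → ZMod 2) → Fin n → ZMod 2),
        0 < k → 0 < n → 0 < d → 0 < δ →
        IsLinearWLDC 3 k n δ Enc →
        (k : ℝ) ≤ (n : ℝ) / c₀ →
        ∃ (k₂ k₃ : ℕ)
          (Enc₂ : (Fin k₂ → ZMod 2) → Fin n → ZMod 2)
          (Enc₃ : (Fin k₃ → ZMod 2) →
            Fin (Nat.choose (2 * n) ⌊Real.sqrt ((n : ℝ) / k) / c⌋₊) → ZMod 2),
          (k : ℝ) / 2 ≤ k₂ ∧ (k : ℝ) / 2 ≤ k₃ ∧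
          (IsLinearWLDC 2 k₂ n (c₁ * δ * d / (d + k)) Enc₂ ∨
           IsLinearWLDC 2 k₃ (Nat.choose (2 * n) ⌊Real.sqrt ((n : ℝ) / k) / c⌋₊)
             (c₂ * δ ^ 2 / d) Enc₃) := by
  refine ⟨1, 16, 1 / 18, 1 / 32768, by norm_num, by norm_num, by norm_num, by norm_num, ?_⟩
  intro k n d δ Enc hk _ hd hδ ⟨hlin, H, hcard, hdisj, hsize, hsum⟩ hkn
  have hH : IsDecodingFamily 3 (hlin.mk' Enc) H := ⟨fun i => ⟨hcard i, hdisj i⟩, hsum⟩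
  have hkn' : 16 * k ≤ n := by
    rw [le_div_iff₀' (by norm_num)] at hkn
    exact_mod_cast hkn
  have : Nonempty (Fin k) := ⟨⟨0, hk⟩⟩
  have hhalf : (k : ℝ) / 2 ≤ k := half_le_self k.cast_nonneg
  obtain ⟨hℓ, hub, hlb⟩ := floor_sqrt_div_bounds hk hkn'
  have hcode := hH.exists_isLinearWLDC_two_or_choose hd hℓ (by simpa using hub) (by simpa using hlb)
    hδ.le (by simpa using hsize)
  rw [div_one]
  rw [Fintype.card_fin, Fintype.card_fin] at hcode
  obtain ⟨Enc₂, hEnc₂⟩ | ⟨k₃, Enc₃, hk₃, hEnc₃⟩ := hcode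
  · exact ⟨k, k, Enc₂, 0, hhalf, hhalf, Or.inl hEnc₂⟩
  · have hk₃' : (k : ℝ) ≤ 2 * k₃ := by exact_mod_cast hk₃
    exact ⟨k, k₃, 0, Enc₃, hhalf, by linarith, Or.inr hEnc₃⟩
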